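/- Let k ∈ {1,2} and let C > 0. There exists C' > 0 such that for all z ∈ K, all ζ' ∈ ℝ × ℝ^n, all t̂ ∈ ℝ × ℝ^n × ℝ with t̂_{ξd} > 0, and every h ∈ ℂ with h² = m̂_k(z,ζ',t̂) and Re h ≥ 0: if μ̂_k(z,ζ',t̂) ≥ C (|t̂|² + |ζ'|²)², then Im ρ̂_{k,+} = −t̂_{ξd} + Re h ≥ C' λ̂. -/

import Mathlib

/-- `m̂_k(z,ζ',t̂) = (-1)^k i (σ + i t̂_σ)² + r_z(ξ' + i t̂_{ξ'})`, where `r_z` is the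
complex-bilinear extension of the quadratic form with coefficient matrix `R`. -/
noncomputable def mhat {n : ℕ} (R : Fin n → Fin n → ℝ) (k : ℕ)
    (σ : ℝ) (ξ : Fin n → ℝ) (tσ : ℝ) (tξ : Fin n → ℝ) : ℂ :=
  (-1 : ℂ) ^ k * Complex.I * ((σ : ℂ) + Complex.I * (tσ : ℂ)) ^ 2 +
    ∑ j, ∑ l, (R j l : ℂ) * ((ξ j : ℂ) + Complex.I * (tξ j : ℂ)) *
      ((ξ l : ℂ) + Complex.I * (tξ l : ℂ))

/-- `μ̂_k = 4 t̂_{ξd}² Re m̂_k − 4 t̂_{ξd}⁴ + (Im m̂_k)²`. -/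
noncomputable def muhat {n : ℕ} (R : Fin n → Fin n → ℝ) (k : ℕ)
    (σ : ℝ) (ξ : Fin n → ℝ) (tσ : ℝ) (tξ : Fin n → ℝ) (tξd : ℝ) : ℝ :=
  4 * tξd ^ 2 * (mhat R k σ ξ tσ tξ).re - 4 * tξd ^ 4 + (mhat R k σ ξ tσ tξ).im ^ 2

/-!
If `h ^ 2 = m̂_k` then `μ̂_k = 4 (Re h ^ 2 - t ^ 2) (Im h ^ 2 + t ^ 2)` with `t = t̂_{ξd}`. Since
`m̂_k` is quadratic with bounded coefficients, `|h| ^ 2` is at most a multiple of `λ̂ ^ 2`. Hence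
`μ̂_k ≥ C λ̂ ^ 4` forces `Re h ^ 2 - t ^ 2 ≥ δ λ̂ ^ 2`, and the bound on `Re h - t` follows from
`2 Re h (Re h - t) ≥ Re h ^ 2 - t ^ 2` and `Re h = O(λ̂)`.
-/

theorem norm_sum_sum_mul_mul_le {ι A : Type*} [Fintype ι] [SeminormedRing A] {a : ι → ι → A}
    {B : ℝ} (ha : ∀ j l, ‖a j l‖ ≤ B) (w : ι → A) :
    ‖∑ j, ∑ l, a j l * w j * w l‖ ≤ Fintype.card ι * B * ∑ j, ‖w j‖ ^ 2 := by
  rcases isEmpty_or_nonempty ι with _ | ⟨⟨i⟩⟩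
  · simp
  have hB : 0 ≤ B := (norm_nonneg _).trans (ha i i)
  have term_le (j l : ι) : ‖a j l * w j * w l‖ ≤ B * (‖w j‖ * ‖w l‖) :=
    calc ‖a j l * w j * w l‖ ≤ ‖a j l‖ * ‖w j‖ * ‖w l‖ := norm_mul₃_le
      _ ≤ B * ‖w j‖ * ‖w l‖ := by gcongr; exact ha j l
      _ = B * (‖w j‖ * ‖w l‖) := mul_assoc _ _ _
  calc ‖∑ j, ∑ l, a j l * w j * w l‖
      ≤ ∑ j, ∑ l, B * (‖w j‖ * ‖w l‖) :=
        norm_sum_le_of_le _ fun j _ => norm_sum_le_of_le _ fun l _ => term_le j l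
    _ = B * (∑ j, ‖w j‖) ^ 2 := by
        rw [sq, Finset.sum_mul_sum]
        simp only [Finset.mul_sum]
    _ ≤ B * (Fintype.card ι * ∑ j, ‖w j‖ ^ 2) := by
        gcongr
        exact sq_sum_le_card_mul_sum_sq
    _ = Fintype.card ι * B * ∑ j, ‖w j‖ ^ 2 := by ring

theorem sq_norm_ofReal_add_I_mul_ofReal (x y : ℝ) :
    ‖(x : ℂ) + Complex.I * (y : ℂ)‖ ^ 2 = x ^ 2 + y ^ 2 := by
  rw [mul_comm, Complex.sq_norm, Complex.normSq_add_mul_I]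

theorem norm_mhat_le {n : ℕ} (R : Fin n → Fin n → ℝ) (k : ℕ) (σ : ℝ) (ξ : Fin n → ℝ) (tσ : ℝ)
    (tξ : Fin n → ℝ) :
    ‖mhat R k σ ξ tσ tξ‖ ≤ (σ ^ 2 + tσ ^ 2) + n * ‖R‖ * ∑ j, (ξ j ^ 2 + tξ j ^ 2) := by
  have entry_le (j l : Fin n) : ‖(R j l : ℂ)‖ ≤ ‖R‖ := by
    rw [Complex.norm_real]
    exact (norm_le_pi_norm (R j) l).trans (norm_le_pi_norm R j)
  have form_le := norm_sum_sum_mul_mul_le entry_le fun j => (ξ j : ℂ) + Complex.I * (tξ j : ℂ)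
  simp only [sq_norm_ofReal_add_I_mul_ofReal, Fintype.card_fin] at form_le
  refine (norm_add_le _ _).trans (add_le_add (le_of_eq ?_) form_le)
  simp [sq_norm_ofReal_add_I_mul_ofReal]

theorem muhat_eq_of_sq_eq_mhat {n : ℕ} {R : Fin n → Fin n → ℝ} {k : ℕ} {σ : ℝ} {ξ : Fin n → ℝ}
    {tσ : ℝ} {tξ : Fin n → ℝ} {h : ℂ} (hh : h ^ 2 = mhat R k σ ξ tσ tξ) (t : ℝ) :
    muhat R k σ ξ tσ tξ t = 4 * (h.re ^ 2 - t ^ 2) * (h.im ^ 2 + t ^ 2) := by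
  simp only [muhat, ← hh, sq h, Complex.mul_re, Complex.mul_im]
  ring

theorem div_mul_le_sub_of_mul_sq_le_sq_sub_sq {a t s δ A : ℝ} (hδ : 0 ≤ δ) (hA : 0 < A) (ha : 0 ≤ a)
    (has : a ≤ A * s) (h : δ * s ^ 2 ≤ a ^ 2 - t ^ 2) : δ / (2 * A) * s ≤ a - t := by
  have hs : 0 ≤ s := nonneg_of_mul_nonneg_right (ha.trans has) hA
  have hta : 0 ≤ a - t := sub_nonneg.2 <|
    le_of_sq_le_sq (sub_nonneg.1 ((mul_nonneg hδ (sq_nonneg s)).trans h)) ha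
  rcases hs.eq_or_lt with rfl | hs
  · simpa using hta
  have key : δ * s * s ≤ (a - t) * (2 * A) * s :=
    calc δ * s * s ≤ a ^ 2 - t ^ 2 := by linarith
      _ ≤ 2 * a * (a - t) := by linarith [sq_nonneg (a - t)]
      _ ≤ 2 * (A * s) * (a - t) := by gcongr
      _ = (a - t) * (2 * A) * s := by ring
  rw [div_mul_eq_mul_div, div_le_iff₀ (by positivity)]
  exact le_of_mul_le_mul_right key hs

theorem div_mul_le_sq_sub_sq_of_mul_sq_le {a b t L C D : ℝ} (hC : 0 < C) (hD : 0 < D)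
    (hbt : b ^ 2 + t ^ 2 ≤ D * L) (h : C * L ^ 2 ≤ 4 * (a ^ 2 - t ^ 2) * (b ^ 2 + t ^ 2)) :
    C / (4 * D) * L ≤ a ^ 2 - t ^ 2 := by
  have hL : 0 ≤ L := nonneg_of_mul_nonneg_right (le_trans (by positivity) hbt) hD
  rcases hL.eq_or_lt with rfl | hL
  · have : t ^ 2 = 0 := by nlinarith [sq_nonneg b, sq_nonneg t]
    nlinarith [sq_nonneg a]
  have hat : 0 < 4 * (a ^ 2 - t ^ 2) :=
    pos_of_mul_pos_left (lt_of_lt_of_le (by positivity) h) (by positivity)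
  have key : C * L * L ≤ (a ^ 2 - t ^ 2) * (4 * D) * L :=
    calc C * L * L = C * L ^ 2 := by ring
      _ ≤ 4 * (a ^ 2 - t ^ 2) * (b ^ 2 + t ^ 2) := h
      _ ≤ 4 * (a ^ 2 - t ^ 2) * (D * L) := by gcongr
      _ = (a ^ 2 - t ^ 2) * (4 * D) * L := by ring
  rw [div_mul_eq_mul_div, div_le_iff₀ (by positivity)]
  exact le_of_mul_le_mul_right key hL

theorem div_mul_sqrt_le_re_sub {h : ℂ} {t L C M : ℝ} (hC : 0 < C) (hM : 0 ≤ M) (hre : 0 ≤ h.re)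
    (ht : t ^ 2 ≤ L) (hh : ‖h ^ 2‖ ≤ M * L)
    (hmu : C * L ^ 2 ≤ 4 * (h.re ^ 2 - t ^ 2) * (h.im ^ 2 + t ^ 2)) :
    C / (4 * (1 + M)) / (2 * (1 + M)) * √L ≤ h.re - t := by
  have hL : 0 ≤ L := (sq_nonneg t).trans ht
  have re_sq_add_im_sq_le : h.re ^ 2 + h.im ^ 2 ≤ M * L := by
    rwa [← eq_add_of_sub_eq' (Complex.sq_norm_sub_sq_re h), ← norm_pow]
  have gap : C / (4 * (1 + M)) * L ≤ h.re ^ 2 - t ^ 2 :=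
    div_mul_le_sq_sub_sq_of_mul_sq_le hC (by positivity) (by linarith [sq_nonneg h.re]) hmu
  have re_le : h.re ≤ (1 + M) * √L := by
    refine le_of_sq_le_sq ?_ (by positivity)
    rw [mul_pow, Real.sq_sqrt hL]
    calc h.re ^ 2 ≤ M * L := by linarith [sq_nonneg h.im]
      _ ≤ (1 + M) ^ 2 * L := by gcongr; nlinarith
  exact div_mul_le_sub_of_mul_sq_le_sq_sub_sq (by positivity) (by positivity) hre re_le
    (by rwa [Real.sq_sqrt hL])

theorem stmt7_general {n : ℕ} {K : Type*} {R : K → Fin n → Fin n → ℝ}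
    (hR : Bornology.IsBounded (Set.range R)) {C : ℝ} (hC : 0 < C) :
    ∃ C' > 0, ∀ (k : ℕ) (z : K) (σ : ℝ) (ξ : Fin n → ℝ) (tσ : ℝ) (tξ : Fin n → ℝ) (tξd : ℝ)
      (h : ℂ),
      h ^ 2 = mhat (R z) k σ ξ tσ tξ →
      0 ≤ h.re →
      C * ((tσ ^ 2 + (∑ j, (tξ j) ^ 2) + tξd ^ 2) + (σ ^ 2 + ∑ j, (ξ j) ^ 2)) ^ 2 ≤
        muhat (R z) k σ ξ tσ tξ tξd →
      C' * √((tσ ^ 2 + (∑ j, (tξ j) ^ 2) + tξd ^ 2) + (σ ^ 2 + ∑ j, (ξ j) ^ 2)) ≤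
        -tξd + h.re := by
  obtain ⟨B, hB, norm_R_le⟩ := hR.exists_pos_norm_le
  have hM : 0 ≤ 1 + n * B := by positivity
  refine ⟨C / (4 * (1 + (1 + n * B))) / (2 * (1 + (1 + n * B))), by positivity, ?_⟩
  intro k z σ ξ tσ tξ tξd h hh hre hmu
  have hξ : 0 ≤ ∑ j, ξ j ^ 2 := by positivity
  have htξ : 0 ≤ ∑ j, tξ j ^ 2 := by positivity
  rw [neg_add_eq_sub]
  refine div_mul_sqrt_le_re_sub hC hM hre (by nlinarith) ?_ (muhat_eq_of_sq_eq_mhat hh tξd ▸ hmu)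
  calc ‖h ^ 2‖ ≤ (σ ^ 2 + tσ ^ 2) + n * ‖R z‖ * ∑ j, (ξ j ^ 2 + tξ j ^ 2) :=
        hh ▸ norm_mhat_le (R z) k σ ξ tσ tξ
    _ ≤ (σ ^ 2 + tσ ^ 2) + n * B * ∑ j, (ξ j ^ 2 + tξ j ^ 2) := by
        gcongr
        exact norm_R_le _ (Set.mem_range_self z)
    _ ≤ (1 + n * B) * ((tσ ^ 2 + (∑ j, tξ j ^ 2) + tξd ^ 2) + (σ ^ 2 + ∑ j, ξ j ^ 2)) := by
        rw [Finset.sum_add_distrib, one_add_mul]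
        refine add_le_add ?_ (mul_le_mul_of_nonneg_left ?_ (by positivity)) <;> nlinarith

/-- If `μ̂_k ≥ C λ̂⁴` (with `t̂_{ξd} > 0`), then `Im ρ̂_{k,+} = −t̂_{ξd} + Re h ≥ C' λ̂`. -/
theorem stmt7 (n : ℕ) (K : Type*) [MetricSpace K] [CompactSpace K]
    (R : K → Fin n → Fin n → ℝ)
    (hRcont : ∀ j l, Continuous fun z => R z j l)
    (c : ℝ) (hc : 0 < c)
    (hpd : ∀ (z : K) (η : Fin n → ℝ), c * (∑ j, (η j) ^ 2) ≤ ∑ j, ∑ l, R z j l * η j * η l)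
    (k : ℕ) (hk : k = 1 ∨ k = 2) (C : ℝ) (hC : 0 < C) :
    ∃ C' > 0, ∀ (z : K) (σ : ℝ) (ξ : Fin n → ℝ) (tσ : ℝ) (tξ : Fin n → ℝ) (tξd : ℝ) (h : ℂ),
      0 < tξd →
      h ^ 2 = mhat (R z) k σ ξ tσ tξ →
      0 ≤ h.re →
      C * ((tσ ^ 2 + (∑ j, (tξ j) ^ 2) + tξd ^ 2) + (σ ^ 2 + ∑ j, (ξ j) ^ 2)) ^ 2 ≤
        muhat (R z) k σ ξ tσ tξ tξd →
      C' * Real.sqrt ((tσ ^ 2 + (∑ j, (tξ j) ^ 2) + tξd ^ 2) + (σ ^ 2 + ∑ j, (ξ j) ^ 2)) ≤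
        -tξd + h.re := by
  obtain ⟨C', hC', H⟩ := stmt7_general
    (isCompact_range (continuous_pi fun j => continuous_pi (hRcont j))).isBounded hC
  exact ⟨C', hC', fun z σ ξ tσ tξ tξd h _ => H k z σ ξ tσ tξ tξd h⟩
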